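/- arXiv:1412.6461 — 2 statements merged into one kernel-verified Lean document; each statement's English description precedes it below -/
import Mathlib

section
/- Let u : ℝ³ → ℝ be a smooth solution of the Pavlov equation u_yy = u_tx + u_y·u_xx − u_x·u_xy (coordinates (t,x,y), subscripts denoting partial derivatives). Then the function φ := u_t − 2x·u_x − y·u_y + 3u satisfies the linearized equation φ_yy = φ_tx + u_y·φ_xx + u_xx·φ_y − u_x·φ_xy − u_xy·φ_x at every point of ℝ³ (i.e., φ is a symmetry of the Pavlov equation). -/
/-- Partial derivative of a function on `ℝ³` in the direction `v`. -/
noncomputable def pd (v : ℝ × ℝ × ℝ) (f : ℝ × ℝ × ℝ → ℝ) : ℝ × ℝ × ℝ → ℝ :=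
  fun p => fderiv ℝ f p v

/-- Coordinates are `(t, x, y)`. -/
noncomputable def dt : (ℝ × ℝ × ℝ → ℝ) → ℝ × ℝ × ℝ → ℝ := pd (1, 0, 0)
noncomputable def dx : (ℝ × ℝ × ℝ → ℝ) → ℝ × ℝ × ℝ → ℝ := pd (0, 1, 0)
noncomputable def dy : (ℝ × ℝ × ℝ → ℝ) → ℝ × ℝ × ℝ → ℝ := pd (0, 0, 1)

/-- The symmetry `φ = u_t − 2x·u_x − y·u_y + 3u` of the Pavlov equation. -/
noncomputable def phi (u : ℝ × ℝ × ℝ → ℝ) : ℝ × ℝ × ℝ → ℝ :=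
  fun p => dt u p - 2 * p.2.1 * dx u p - p.2.2 * dy u p + 3 * u p

/-!
Let `X = ∂_t − 2x ∂_x − y ∂_y`. Since `[∂_x, X] = −2 ∂_x`, `[∂_y, X] = −∂_y` and `[∂_t, X] = 0`,
moving `X + k` past a partial derivative only shifts the weight `k`, and products obey the graded
Leibniz rule `(X + a) f · g + f · (X + b) g = (X + (a + b)) (f g)`. Giving `u` the weight `3` makes
each of `u_yy`, `u_tx`, `u_y u_xx` and `u_x u_xy` of weight `1`. Hence, with `F` the Pavlov operator
and `ℓ_u` its linearization, the off-shell identity `ℓ_u ((X + 3) u) = (X + 1) (F u)` holds for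
every `u` of class `C³`, and its right-hand side vanishes when `F u = 0`.
-/

open scoped Topology

section WeightedLieDeriv

variable {E : Type*} [NormedAddCommGroup E] [NormedSpace ℝ E]
  {X : E → E} {f g : E → ℝ} {p v : E} {a b k : ℝ}

/-- The operator `X + k` on scalar functions: the derivative along the vector field `X` plus
multiplication by the constant `k`, the weight. -/
noncomputable def weightedLieDeriv (X : E → E) (k : ℝ) (f : E → ℝ) : E → ℝ :=
  fun p => fderiv ℝ f p (X p) + k * f p

lemma weightedLieDeriv_congr (h : f =ᶠ[𝓝 p] g) :
    weightedLieDeriv X k f p = weightedLieDeriv X k g p := by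
  simp only [weightedLieDeriv, h.fderiv_eq, h.eq_of_nhds]

lemma weightedLieDeriv_zero : weightedLieDeriv X k 0 p = 0 := by
  simp [weightedLieDeriv]

lemma weightedLieDeriv_add (hf : DifferentiableAt ℝ f p) (hg : DifferentiableAt ℝ g p) :
    weightedLieDeriv X k (f + g) p = weightedLieDeriv X k f p + weightedLieDeriv X k g p := by
  simp only [weightedLieDeriv, fderiv_add hf hg, add_apply, Pi.add_apply]
  ring

lemma weightedLieDeriv_sub (hf : DifferentiableAt ℝ f p) (hg : DifferentiableAt ℝ g p) :
    weightedLieDeriv X k (f - g) p = weightedLieDeriv X k f p - weightedLieDeriv X k g p := by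
  simp only [weightedLieDeriv, fderiv_sub hf hg, sub_apply, Pi.sub_apply]
  ring

lemma weightedLieDeriv_mul (hf : DifferentiableAt ℝ f p) (hg : DifferentiableAt ℝ g p)
    (hk : a + b = k) :
    weightedLieDeriv X k (f * g) p =
      weightedLieDeriv X a f p * g p + f p * weightedLieDeriv X b g p := by
  simp only [weightedLieDeriv, fderiv_mul hf hg, ← hk, add_apply, smul_apply, smul_eq_mul,
    Pi.mul_apply]
  ring

lemma fderiv_weightedLieDeriv (hX : DifferentiableAt ℝ X p) (hv : fderiv ℝ X p v = a • v)
    (hf : ContDiffAt ℝ 2 f p) :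
    fderiv ℝ (weightedLieDeriv X k f) p v =
      weightedLieDeriv X (k + a) (fun q => fderiv ℝ f q v) p := by
  have hdf : DifferentiableAt ℝ (fderiv ℝ f) p :=
    (hf.fderiv_right (m := 1) (by norm_num)).differentiableAt one_ne_zero
  have hf' : DifferentiableAt ℝ f p := hf.differentiableAt two_ne_zero
  have hsymm : fderiv ℝ (fderiv ℝ f) p v (X p) = fderiv ℝ (fderiv ℝ f) p (X p) v :=
    hf.isSymmSndFDerivAt (by simp) v (X p)
  have hlhs : fderiv ℝ (weightedLieDeriv X k f) p v =
      fderiv ℝ (fderiv ℝ f) p v (X p) + fderiv ℝ f p (a • v) + k * fderiv ℝ f p v := by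
    unfold weightedLieDeriv
    rw [fderiv_fun_add (hdf.clm_apply hX) (hf'.const_mul k), fderiv_clm_apply hdf hX,
      fderiv_const_mul hf']
    simp [hv, add_comm]
  have hrhs : fderiv ℝ (fun q => fderiv ℝ f q v) p (X p) =
      fderiv ℝ (fderiv ℝ f) p (X p) v := by
    rw [fderiv_clm_apply hdf (differentiableAt_const v)]
    simp
  rw [hlhs, hsymm, map_smul, smul_eq_mul, weightedLieDeriv, hrhs]
  ring

end WeightedLieDeriv

section PartialDerivatives

variable {X : ℝ × ℝ × ℝ → ℝ × ℝ × ℝ} {f : ℝ × ℝ × ℝ → ℝ} {p v w : ℝ × ℝ × ℝ} {a b k : ℝ}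

lemma contDiffAt_pd {m n : WithTop ℕ∞} (hf : ContDiffAt ℝ n f p) (hmn : m + 1 ≤ n) :
    ContDiffAt ℝ m (pd v f) p :=
  (hf.fderiv_right hmn).clm_apply contDiffAt_const

lemma pd_pd_weightedLieDeriv (hX : Differentiable ℝ X) (hv : ∀ q, fderiv ℝ X q v = a • v)
    (hw : ∀ q, fderiv ℝ X q w = b • w) (hf : ContDiffAt ℝ 3 f p) :
    pd v (pd w (weightedLieDeriv X k f)) p =
      weightedLieDeriv X (k + b + a) (pd v (pd w f)) p := by
  have hinner : pd w (weightedLieDeriv X k f) =ᶠ[𝓝 p] weightedLieDeriv X (k + b) (pd w f) :=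
    ((hf.of_le (by norm_num)).eventually (by simp)).mono
      fun q hq => fderiv_weightedLieDeriv (hX q) (hw q) hq
  calc pd v (pd w (weightedLieDeriv X k f)) p
      = pd v (weightedLieDeriv X (k + b) (pd w f)) p := by simp only [pd, hinner.fderiv_eq]
    _ = weightedLieDeriv X (k + b + a) (pd v (pd w f)) p :=
      fderiv_weightedLieDeriv (hX p) (hv p) (contDiffAt_pd hf (by norm_num))

end PartialDerivatives

section Pavlov

variable {u : ℝ × ℝ × ℝ → ℝ} {p : ℝ × ℝ × ℝ}

/-- The Pavlov operator `F u = u_yy − u_tx − u_y u_xx + u_x u_xy`, whose zeros are the solutions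
of the Pavlov equation. -/
noncomputable def pavlovOperator (u : ℝ × ℝ × ℝ → ℝ) : ℝ × ℝ × ℝ → ℝ :=
  dy (dy u) - dx (dt u) - dy u * dx (dx u) + dx u * dy (dx u)

/-- The linearization of `pavlovOperator` at `u`, applied to `φ`. -/
noncomputable def pavlovLinearization (u φ : ℝ × ℝ × ℝ → ℝ) : ℝ × ℝ × ℝ → ℝ :=
  dy (dy φ) - dx (dt φ) - (dy φ * dx (dx u) + dy u * dx (dx φ))
    + (dx φ * dy (dx u) + dx u * dy (dx φ))

/-- The vector field `∂_t − 2x ∂_x − y ∂_y`: translation in `t` combined with the scaling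
that gives `x` and `y` the weights `−2` and `−1`. -/
def pavlovField (p : ℝ × ℝ × ℝ) : ℝ × ℝ × ℝ :=
  (1, -2 * p.2.1, -p.2.2)

lemma differentiable_pavlovField : Differentiable ℝ pavlovField := by
  unfold pavlovField
  fun_prop

lemma fderiv_pavlovField (p v : ℝ × ℝ × ℝ) :
    fderiv ℝ pavlovField p v = (0, -2 * v.2.1, -v.2.2) := by
  have hx : HasFDerivAt (fun q : ℝ × ℝ × ℝ => -2 * q.2.1) _ p :=
    (hasFDerivAt_snd (𝕜 := ℝ) (p := p)).fst.const_mul (-2)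
  have hy : HasFDerivAt (fun q : ℝ × ℝ × ℝ => -q.2.2) _ p :=
    (hasFDerivAt_snd (𝕜 := ℝ) (p := p)).snd.neg
  have h : HasFDerivAt pavlovField _ p := (hasFDerivAt_const 1 p).prodMk (hx.prodMk hy)
  rw [h.fderiv]
  simp

lemma fderiv_pavlovField_t (p : ℝ × ℝ × ℝ) :
    fderiv ℝ pavlovField p (1, 0, 0) = (0 : ℝ) • (1, 0, 0) := by
  simp [fderiv_pavlovField]

lemma fderiv_pavlovField_x (p : ℝ × ℝ × ℝ) :
    fderiv ℝ pavlovField p (0, 1, 0) = (-2 : ℝ) • (0, 1, 0) := by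
  simp [fderiv_pavlovField]

lemma fderiv_pavlovField_y (p : ℝ × ℝ × ℝ) :
    fderiv ℝ pavlovField p (0, 0, 1) = (-1 : ℝ) • (0, 0, 1) := by
  simp [fderiv_pavlovField]

lemma phi_eq_weightedLieDeriv (u : ℝ × ℝ × ℝ → ℝ) :
    phi u = weightedLieDeriv pavlovField 3 u := by
  funext p
  have hfield : pavlovField p =
      (1, 0, 0) + (-2 * p.2.1) • (0, 1, 0) + (-p.2.2) • (0, 0, 1) := by
    simp [pavlovField]
  simp only [phi, dt, dx, dy, pd, weightedLieDeriv, hfield, map_add, map_smul, smul_eq_mul]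
  ring

lemma weightedLieDeriv_pavlovOperator {X : ℝ × ℝ × ℝ → ℝ × ℝ × ℝ} (hu : ContDiffAt ℝ 3 u p) :
    weightedLieDeriv X 1 (pavlovOperator u) p =
      weightedLieDeriv X 1 (dy (dy u)) p - weightedLieDeriv X 1 (dx (dt u)) p
        - (weightedLieDeriv X 2 (dy u) p * dx (dx u) p
          + dy u p * weightedLieDeriv X (-1) (dx (dx u)) p)
        + (weightedLieDeriv X 1 (dx u) p * dy (dx u) p
          + dx u p * weightedLieDeriv X 0 (dy (dx u)) p) := by
  have hfst (v) : DifferentiableAt ℝ (pd v u) p :=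
    (contDiffAt_pd (m := 2) hu (by norm_num)).differentiableAt two_ne_zero
  have hsnd (v w) : DifferentiableAt ℝ (pd v (pd w u)) p :=
    (contDiffAt_pd (m := 1) (contDiffAt_pd (m := 2) hu (by norm_num))
      (by norm_num)).differentiableAt one_ne_zero
  unfold pavlovOperator dt dx dy
  rw [weightedLieDeriv_add (((hsnd _ _).sub (hsnd _ _)).sub ((hfst _).mul (hsnd _ _)))
      ((hfst _).mul (hsnd _ _)),
    weightedLieDeriv_sub ((hsnd _ _).sub (hsnd _ _)) ((hfst _).mul (hsnd _ _)),
    weightedLieDeriv_sub (hsnd _ _) (hsnd _ _),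
    weightedLieDeriv_mul (a := 2) (b := -1) (k := 1) (hfst _) (hsnd _ _) (by norm_num),
    weightedLieDeriv_mul (a := 1) (b := 0) (k := 1) (hfst _) (hsnd _ _) (by norm_num)]

theorem pavlovLinearization_weightedLieDeriv (hu : ContDiffAt ℝ 3 u p) :
    pavlovLinearization u (weightedLieDeriv pavlovField 3 u) p =
      weightedLieDeriv pavlovField 1 (pavlovOperator u) p := by
  have hfst {v a} (hv : ∀ q, fderiv ℝ pavlovField q v = a • v) :
      pd v (weightedLieDeriv pavlovField 3 u) p =
        weightedLieDeriv pavlovField (3 + a) (pd v u) p :=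
    fderiv_weightedLieDeriv (differentiable_pavlovField p) (hv p) (hu.of_le (by norm_num))
  have hsnd {v w a b} (hv : ∀ q, fderiv ℝ pavlovField q v = a • v)
      (hw : ∀ q, fderiv ℝ pavlovField q w = b • w) :
      pd v (pd w (weightedLieDeriv pavlovField 3 u)) p =
        weightedLieDeriv pavlovField (3 + b + a) (pd v (pd w u)) p :=
    pd_pd_weightedLieDeriv differentiable_pavlovField hv hw hu
  rw [weightedLieDeriv_pavlovOperator hu]
  simp only [pavlovLinearization, dt, dx, dy, Pi.add_apply, Pi.sub_apply, Pi.mul_apply,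
    hfst fderiv_pavlovField_x, hfst fderiv_pavlovField_y,
    hsnd fderiv_pavlovField_x fderiv_pavlovField_t,
    hsnd fderiv_pavlovField_x fderiv_pavlovField_x,
    hsnd fderiv_pavlovField_y fderiv_pavlovField_x,
    hsnd fderiv_pavlovField_y fderiv_pavlovField_y]
  norm_num

theorem pavlov_symmetry_general (hu : ContDiffAt ℝ 3 u p)
    (hsol : ∀ᶠ q in 𝓝 p,
      dy (dy u) q = dx (dt u) q + dy u q * dx (dx u) q - dx u q * dy (dx u) q) :
    dy (dy (phi u)) p =
      dx (dt (phi u)) p + dy u p * dx (dx (phi u)) p + dx (dx u) p * dy (phi u) p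
        - dx u p * dy (dx (phi u)) p - dy (dx u) p * dx (phi u) p := by
  have hF : pavlovOperator u =ᶠ[𝓝 p] 0 := by
    filter_upwards [hsol] with q hq
    simp only [pavlovOperator, Pi.add_apply, Pi.sub_apply, Pi.mul_apply, Pi.zero_apply, hq]
    ring
  have hlin : pavlovLinearization u (phi u) p = 0 := by
    rw [phi_eq_weightedLieDeriv, pavlovLinearization_weightedLieDeriv hu,
      weightedLieDeriv_congr hF, weightedLieDeriv_zero]
  simp only [pavlovLinearization, Pi.add_apply, Pi.sub_apply, Pi.mul_apply] at hlin
  linear_combination hlin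

end Pavlov

/-- If `u` is a smooth solution of the Pavlov equation
`u_yy = u_tx + u_y·u_xx − u_x·u_xy`, then `φ = u_t − 2x·u_x − y·u_y + 3u`
satisfies the linearized equation
`φ_yy = φ_tx + u_y·φ_xx + u_xx·φ_y − u_x·φ_xy − u_xy·φ_x`. -/
theorem pavlov_symmetry (u : ℝ × ℝ × ℝ → ℝ)
    (hu : ContDiff ℝ (⊤ : ℕ∞) u)
    (hsol : ∀ p : ℝ × ℝ × ℝ,
      dy (dy u) p = dx (dt u) p + dy u p * dx (dx u) p - dx u p * dy (dx u) p) :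
    ∀ p : ℝ × ℝ × ℝ,
      dy (dy (phi u)) p =
        dx (dt (phi u)) p + dy u p * dx (dx (phi u)) p + dx (dx u) p * dy (phi u) p
          - dx u p * dy (dx (phi u)) p - dy (dx u) p * dx (phi u) p :=
  fun _ => pavlov_symmetry_general (contDiff_infty.1 hu 3).contDiffAt (.of_forall hsol)
end

section
/- Define D(y,p,q,w) := w² − p·w − q − y and the rational functions X := −1/D and Y := −(w−p)/D. Then for all real numbers x, y, p, q, r, s, w with D(y,p,q,w) ≠ 0, setting t := (q+y)·r − p·s − 2, the identity ∂X/∂y + (∂X/∂p)·s + (∂X/∂q)·t + (∂X/∂w)·Y = (∂Y/∂p)·r + (∂Y/∂q)·s + (∂Y/∂w)·X holds, all partial derivatives being taken at the point (y,p,q,w). (Here p,q,r,s,t stand for u_x,u_y,u_xx,u_xy,u_yy, t being eliminated via Equation (E4); the identity is exactly the cross-derivative compatibility condition asserting that the system w_x = X, w_y = Y is a differential covering of Equation (E4).) -/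
/-- Denominator `D(y,p,q,w) = w² − pw − q − y` of the covering (15). -/
noncomputable def covD (y p q w : ℝ) : ℝ := w ^ 2 - p * w - q - y

/-- `X = −1/D` from the covering (15) of Equation (E4). -/
noncomputable def covX (y p q w : ℝ) : ℝ := -1 / covD y p q w

/-- `Y = −(w − p)/D` from the covering (15) of Equation (E4). -/
noncomputable def covY (y p q w : ℝ) : ℝ := -(w - p) / covD y p q w

/-!
Since `Y = (w - p) X` and `X = -1/D`, the cross-derivative defect is
`D_y X - D_x Y = (D_y D - (w - p) D_x D) / D² - (w_x - r) X`. In the numerator the two terms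
containing `∂D/∂w` cancel, because `w_y = (w - p) w_x`. As `(w_x - r) X = (1 + r D) / D²`, the
whole difference is `((q + y) r - p s - 2 - t) / D²`, the defect of (E4) divided by `D²`.
-/

section

variable {𝕜 : Type*} [NontriviallyNormedField 𝕜]

/-- The total derivative `D_x F` of a function `F` of `(y, u_x, u_y, w)`, at a point where
`r = u_xx`, `s = u_xy` and `wx = w_x`. -/
noncomputable def totalDerivX (F : 𝕜 → 𝕜 → 𝕜 → 𝕜 → 𝕜) (y p q w r s wx : 𝕜) : 𝕜 :=
  deriv (fun p' => F y p' q w) p * r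
    + deriv (fun q' => F y p q' w) q * s
    + deriv (fun w' => F y p q w') w * wx

/-- The total derivative `D_y F` of a function `F` of `(y, u_x, u_y, w)`, at a point where
`s = u_xy`, `t = u_yy` and `wy = w_y`; the first term is the explicit dependence on `y`. -/
noncomputable def totalDerivY (F : 𝕜 → 𝕜 → 𝕜 → 𝕜 → 𝕜) (y p q w s t wy : 𝕜) : 𝕜 :=
  deriv (fun y' => F y' p q w) y
    + deriv (fun p' => F y p' q w) p * s
    + deriv (fun q' => F y p q' w) q * t
    + deriv (fun w' => F y p q w') w * wy

/-- The denominator `covD` of the covering, over a nontrivially normed field. -/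
def coveringDenom (y p q w : 𝕜) : 𝕜 := w ^ 2 - p * w - q - y

/-- The right-hand side `covX` of `w_x = X`, over a nontrivially normed field. -/
def coveringX (y p q w : 𝕜) : 𝕜 := -1 / coveringDenom y p q w

/-- The right-hand side `covY` of `w_y = Y`, over a nontrivially normed field. -/
def coveringY (y p q w : 𝕜) : 𝕜 := -(w - p) / coveringDenom y p q w

theorem coveringY_eq_mul_coveringX (y p q w : 𝕜) :
    coveringY y p q w = (w - p) * coveringX y p q w := by
  unfold coveringX coveringY
  ring

theorem hasDerivAt_coveringDenom_y (y p q w : 𝕜) :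
    HasDerivAt (fun y' => coveringDenom y' p q w) (-1) y :=
  (hasDerivAt_id' y).const_sub (w ^ 2 - p * w - q)

theorem hasDerivAt_coveringDenom_p (y p q w : 𝕜) :
    HasDerivAt (fun p' => coveringDenom y p' q w) (-w) p := by
  simpa only [coveringDenom, one_mul] using
    ((((hasDerivAt_id' p).mul_const w).const_sub (w ^ 2)).sub_const q).sub_const y

theorem hasDerivAt_coveringDenom_q (y p q w : 𝕜) :
    HasDerivAt (fun q' => coveringDenom y p q' w) (-1) q :=
  ((hasDerivAt_id' q).const_sub (w ^ 2 - p * w)).sub_const y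

theorem hasDerivAt_coveringDenom_w (y p q w : 𝕜) :
    HasDerivAt (fun w' => coveringDenom y p q w') (2 * w - p) w := by
  have hsq : HasDerivAt (fun w' : 𝕜 => w' ^ 2) (2 * w) w := by
    simpa using hasDerivAt_pow 2 w
  simpa only [coveringDenom, mul_one] using
    ((hsq.fun_sub ((hasDerivAt_id' w).const_mul p)).sub_const q).sub_const y

theorem totalDerivX_coveringDenom (y p q w r s wx : 𝕜) :
    totalDerivX coveringDenom y p q w r s wx = -w * r - s + (2 * w - p) * wx := by
  rw [totalDerivX, (hasDerivAt_coveringDenom_p y p q w).deriv,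
    (hasDerivAt_coveringDenom_q y p q w).deriv, (hasDerivAt_coveringDenom_w y p q w).deriv]
  ring

theorem totalDerivY_coveringDenom (y p q w s t wy : 𝕜) :
    totalDerivY coveringDenom y p q w s t wy = -1 - w * s - t + (2 * w - p) * wy := by
  rw [totalDerivY, (hasDerivAt_coveringDenom_y y p q w).deriv,
    (hasDerivAt_coveringDenom_p y p q w).deriv, (hasDerivAt_coveringDenom_q y p q w).deriv,
    (hasDerivAt_coveringDenom_w y p q w).deriv]
  ring

theorem hasDerivAt_neg_one_div {f : 𝕜 → 𝕜} {f' a : 𝕜} (hf : HasDerivAt f f' a)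
    (ha : f a ≠ 0) : HasDerivAt (fun z => -1 / f z) (f' / f a ^ 2) a := by
  simpa using (hasDerivAt_const a (-1 : 𝕜)).fun_div hf ha

section

variable {y p q w : 𝕜}

theorem hasDerivAt_coveringX_y (hD : coveringDenom y p q w ≠ 0) :
    HasDerivAt (fun y' => coveringX y' p q w) (-1 / coveringDenom y p q w ^ 2) y :=
  hasDerivAt_neg_one_div (hasDerivAt_coveringDenom_y y p q w) hD

theorem hasDerivAt_coveringX_p (hD : coveringDenom y p q w ≠ 0) :
    HasDerivAt (fun p' => coveringX y p' q w) (-w / coveringDenom y p q w ^ 2) p :=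
  hasDerivAt_neg_one_div (hasDerivAt_coveringDenom_p y p q w) hD

theorem hasDerivAt_coveringX_q (hD : coveringDenom y p q w ≠ 0) :
    HasDerivAt (fun q' => coveringX y p q' w) (-1 / coveringDenom y p q w ^ 2) q :=
  hasDerivAt_neg_one_div (hasDerivAt_coveringDenom_q y p q w) hD

theorem hasDerivAt_coveringX_w (hD : coveringDenom y p q w ≠ 0) :
    HasDerivAt (fun w' => coveringX y p q w') ((2 * w - p) / coveringDenom y p q w ^ 2) w :=
  hasDerivAt_neg_one_div (hasDerivAt_coveringDenom_w y p q w) hD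

theorem totalDerivX_coveringX (r s wx : 𝕜) (hD : coveringDenom y p q w ≠ 0) :
    totalDerivX coveringX y p q w r s wx
      = totalDerivX coveringDenom y p q w r s wx / coveringDenom y p q w ^ 2 := by
  rw [totalDerivX_coveringDenom, totalDerivX, (hasDerivAt_coveringX_p hD).deriv,
    (hasDerivAt_coveringX_q hD).deriv, (hasDerivAt_coveringX_w hD).deriv]
  ring

theorem totalDerivY_coveringX (s t wy : 𝕜) (hD : coveringDenom y p q w ≠ 0) :
    totalDerivY coveringX y p q w s t wy
      = totalDerivY coveringDenom y p q w s t wy / coveringDenom y p q w ^ 2 := by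
  rw [totalDerivY_coveringDenom, totalDerivY, (hasDerivAt_coveringX_y hD).deriv,
    (hasDerivAt_coveringX_p hD).deriv, (hasDerivAt_coveringX_q hD).deriv,
    (hasDerivAt_coveringX_w hD).deriv]
  ring

theorem totalDerivX_coveringY (r s wx : 𝕜) (hD : coveringDenom y p q w ≠ 0) :
    totalDerivX coveringY y p q w r s wx
      = (wx - r) * coveringX y p q w + (w - p) * totalDerivX coveringX y p q w r s wx := by
  have hp := ((hasDerivAt_id' p).const_sub w).fun_mul
    (hasDerivAt_coveringX_p hD).differentiableAt.hasDerivAt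
  have hq := (hasDerivAt_coveringX_q hD).differentiableAt.hasDerivAt.const_mul (w - p)
  have hw := ((hasDerivAt_id' w).sub_const p).fun_mul
    (hasDerivAt_coveringX_w hD).differentiableAt.hasDerivAt
  simp only [totalDerivX, coveringY_eq_mul_coveringX, hp.deriv, hq.deriv, hw.deriv]
  ring

theorem totalDerivY_coveringX_sub_totalDerivX_coveringY (r s t : 𝕜)
    (hD : coveringDenom y p q w ≠ 0) :
    totalDerivY coveringX y p q w s t (coveringY y p q w)
        - totalDerivX coveringY y p q w r s (coveringX y p q w)
      = ((q + y) * r - p * s - 2 - t) / coveringDenom y p q w ^ 2 := by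
  set D := coveringDenom y p q w with hD_def
  have hnum : totalDerivY coveringDenom y p q w s t (coveringY y p q w)
      - (w - p) * totalDerivX coveringDenom y p q w r s (coveringX y p q w)
      = w * (w - p) * r - p * s - t - 1 := by
    rw [totalDerivY_coveringDenom, totalDerivX_coveringDenom, coveringY_eq_mul_coveringX]
    ring
  have hrest : (coveringX y p q w - r) * coveringX y p q w = (1 + r * D) / D ^ 2 := by
    rw [coveringX, ← hD_def]
    field_simp
    ring
  calc
    _ = (totalDerivY coveringDenom y p q w s t (coveringY y p q w)
            - (w - p) * totalDerivX coveringDenom y p q w r s (coveringX y p q w)) / D ^ 2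
          - (coveringX y p q w - r) * coveringX y p q w := by
      rw [totalDerivX_coveringY _ _ _ hD, totalDerivX_coveringX _ _ _ hD,
        totalDerivY_coveringX _ _ _ hD]
      ring
    _ = (w * (w - p) * r - p * s - t - 1 - (1 + r * D)) / D ^ 2 := by
      rw [hnum, hrest, ← sub_div]
    _ = ((q + y) * r - p * s - 2 - t) / D ^ 2 := by
      congr 1
      rw [hD_def, coveringDenom]
      ring

theorem covering_E4_compatibility_general (r s t : 𝕜) (hD : coveringDenom y p q w ≠ 0) :
    totalDerivY coveringX y p q w s t (coveringY y p q w)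
        = totalDerivX coveringY y p q w r s (coveringX y p q w)
      ↔ t = (q + y) * r - p * s - 2 := by
  rw [← sub_eq_zero, totalDerivY_coveringX_sub_totalDerivX_coveringY r s t hD,
    div_eq_zero_iff, or_iff_left (pow_ne_zero 2 hD), sub_eq_zero, eq_comm]

end

end

/-- Cross-derivative compatibility `D_y(X) = D_x(Y)` of the covering
`w_x = X`, `w_y = Y` over Equation (E4)
`u_yy = (u_y + y)·u_xx − u_x·u_xy − 2`, where `p,q,r,s,t` stand for
`u_x,u_y,u_xx,u_xy,u_yy` and `t = (q+y)·r − p·s − 2` is eliminated via (E4). -/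
theorem covering_E4_compatibility (x y p q r s w : ℝ)
    (hD : covD y p q w ≠ 0) :
    deriv (fun y' => covX y' p q w) y
      + deriv (fun p' => covX y p' q w) p * s
      + deriv (fun q' => covX y p q' w) q * ((q + y) * r - p * s - 2)
      + deriv (fun w' => covX y p q w') w * covY y p q w
    = deriv (fun p' => covY y p' q w) p * r
      + deriv (fun q' => covY y p q' w) q * s
      + deriv (fun w' => covY y p q w') w * covX y p q w :=
  (covering_E4_compatibility_general r s _ hD).mpr rfl
end
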